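/- Fix δ > 0 and ε > 0. Then there exist C > 0, η > 0 and n₀ such that for all n ≥ n₀ and all p ∈ [δ, 1−δ], with probability at least 1 − exp(−n^η) over G = G_{n,p} one has |V − p(1−p)n²| ≤ C·n^{3/2+ε}, where V = Σ_{v∈[n]} d(v)² − n·d(G)². -/

import Mathlib

/-! Write `D v = d(v) - p (n - 1)` and `S = e(G) - p n (n - 1) / 2`. The degree variance is
invariant under shifts and `∑ v, D v = 2 S`, so `V = ∑ v, D v ^ 2 - 4 S ^ 2 / n`. McDiarmid's
inequality over the independent edge indicators gives `|S| ≤ n ^ (1 + ε / 2)` and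
`|D v| ≤ L := n ^ (1 / 2 + ε / 2)` for all `v`, with stretched exponentially small failure
probability.

Flipping an edge `uv` can change `∑ v, D v ^ 2` by order `n`, which is too much for McDiarmid's
inequality. The truncation `∑ v, min (D v ^ 2) (L ^ 2)` coincides with it as soon as all `|D v|` are
at most `L`, but changes by at most `4 L` per edge, which gives deviations of order
`n * L * n ^ (ε / 2) = n ^ (3 / 2 + ε)`. Since `|D v| ≤ n` always, truncating moves the mean
`p (1 - p) n (n - 1)` by at most `n ^ 3` times the tail probability of a single degree.
-/

open Finset MeasureTheory ProbabilityTheory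

noncomputable section

/-- Uniform probability of an event `P` over a finite sample space `Ω`. -/
def Pru {α : Type*} (Ω : Finset α) (P : α → Prop) : ℝ := by
  classical exact ((Ω.filter P).card : ℝ) / Ω.card

/-- Expectation of `f` under the uniform distribution on `Ω`. -/
def Exu {α : Type*} (Ω : Finset α) (f : α → ℝ) : ℝ := (∑ a ∈ Ω, f a) / Ω.card

/-- Variance of `f` under the uniform distribution on `Ω`. -/
def Varu {α : Type*} (Ω : Finset α) (f : α → ℝ) : ℝ := Exu Ω (fun a => (f a - Exu Ω f) ^ 2)

/-- Conditional expectation of `f` given the value of `g`, under uniform distribution on `Ω`. -/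
def condExpU {α β : Type*} (Ω : Finset α) (f : α → ℝ) (g : α → β) (ω : α) : ℝ := by
  classical exact Exu (Ω.filter (fun ω' => g ω' = g ω)) f

/-- The edge set of the complete graph on `[n]`. -/
def completeEdges (n : ℕ) : Finset (Sym2 (Fin n)) := by
  classical exact Finset.univ.filter (fun e => ¬ e.IsDiag)

/-- A finset of `Sym2`s is a graph if it has no loops. -/
def IsGraph {n : ℕ} (G : Finset (Sym2 (Fin n))) : Prop := ∀ e ∈ G, ¬ e.IsDiag

/-- The sample space of `G_{n,M}`: all graphs on `[n]` with exactly `M` edges. -/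
def graphsM (n M : ℕ) : Finset (Finset (Sym2 (Fin n))) := by
  classical exact (completeEdges n).powerset.filter (fun G => G.card = M)

/-- `e(S)`: number of edges of `G` with both endpoints in `S`. -/
def edgesIn {n : ℕ} (G : Finset (Sym2 (Fin n))) (S : Finset (Fin n)) : ℕ := by
  classical exact (G.filter (fun e => ∀ v ∈ e, v ∈ S)).card

/-- `d_S(v)`: number of neighbours of `v` (in graph `G`) lying in `S`. -/
def dS {n : ℕ} (G : Finset (Sym2 (Fin n))) (S : Finset (Fin n)) (v : Fin n) : ℕ := by
  classical exact (S.filter (fun w => s(v, w) ∈ G)).card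

/-- All `k`-element subsets of `[n]`. -/
def kSets (n k : ℕ) : Finset (Finset (Fin n)) := Finset.univ.powersetCard k

/-- Probability of an event under the uniform random graph `G_{n,M}`. -/
def PrGnM (n M : ℕ) (P : Finset (Sym2 (Fin n)) → Prop) : ℝ := Pru (graphsM n M) P

/-- Probability of an event under the binomial random graph `G_{n,p}`. -/
def PrGnp (n : ℕ) (p : ℝ) (P : Finset (Sym2 (Fin n)) → Prop) : ℝ := by
  classical exact ∑ G ∈ (completeEdges n).powerset,
    if (P G) then p ^ G.card * (1 - p) ^ ((completeEdges n).card - G.card) else 0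

/-- `N = n(n-1)/2` as a real number. -/
def Nr (n : ℕ) : ℝ := (n : ℝ) * ((n : ℝ) - 1) / 2

/-- `K = k(k-1)/2` as a real number. -/
def Kr (k : ℕ) : ℝ := (k : ℝ) * ((k : ℝ) - 1) / 2

/-- `λ = ((n²-k²)k²/(2n⁴))·(M(N-M)/N²)`. -/
def lamP (n M k : ℕ) : ℝ :=
  (((n:ℝ)^2 - (k:ℝ)^2) * (k:ℝ)^2 / (2 * (n:ℝ)^4)) * ((M:ℝ) * (Nr n - (M:ℝ)) / (Nr n)^2)

/-- The mean `K·M/N`. -/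
def muP (n M k : ℕ) : ℝ := Kr k * (M:ℝ) / Nr n

/-- `W = (e(S) - K·M/N)/n`. -/
def Wfun (n M k : ℕ) (G : Finset (Sym2 (Fin n))) (S : Finset (Fin n)) : ℝ :=
  ((edgesIn G S : ℝ) - muP n M k) / n

/-- `V = Σ_v d(v)² - n·d(G)²`, i.e. `n` times the degree variance. -/
def Vdeg {n : ℕ} (G : Finset (Sym2 (Fin n))) : ℝ :=
  (∑ v : Fin n, (dS G Finset.univ v : ℝ) ^ 2) - (n:ℝ) * (2 * (G.card : ℝ) / n) ^ 2

/-- Gaussian CDF with mean `m` and variance `v`. -/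
def gaussCdf (m v z : ℝ) : ℝ := ((gaussianReal m v.toNNReal) (Set.Iic z)).toReal

/-- Gaussian measure of a set, mean `m`, variance `v`. -/
def gaussMeas (m v : ℝ) (A : Set ℝ) : ℝ := ((gaussianReal m v.toNNReal) A).toReal

/-- Gaussian density with mean `m` and variance `v`. -/
def gaussPdf (m v x : ℝ) : ℝ := gaussianPDFReal m v.toNNReal x

/-- `P(Y ∈ ·)` for `Y ~ Bin(ν, p)`. -/
def binomPr (ν : ℕ) (p : ℝ) (P : ℕ → Prop) : ℝ := by
  classical exact ∑ j ∈ Finset.range (ν + 1),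
    if (P j) then (ν.choose j : ℝ) * p ^ j * (1 - p) ^ (ν - j) else 0

/-- Sample space for "uniform `k`-set `S`, then uniform `x ∈ S` and `x̄ ∈ S̄`". -/
def SwapΩ (n k : ℕ) : Finset (Σ _ : Finset (Fin n), Fin n × Fin n) :=
  (kSets n k).sigma (fun S => S ×ˢ Sᶜ)

/-- A triple `(a, r, t)` is valid for `β`. -/
def ValidTriple (β : ℝ) (n a r t : ℕ) : Prop :=
  a ≤ r ∧
  (∃ c : ℝ, 1/2 ≤ c ∧ c ≤ 1 ∧ (a : ℝ) = c * (t:ℝ) ^ ((3:ℝ)/2) * (n:ℝ) ^ (2*β - 1/2)) ∧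
  (r : ℝ) ≤ (n:ℝ) ^ (-β) * Real.sqrt ((n:ℝ) * (t:ℝ))

open scoped NNReal unitInterval

section SubGaussian

variable {α β : Type*} [MeasurableSpace α] [MeasurableSpace β] {μ : Measure α} {ν : Measure β}

lemma hasSubgaussianMGF_mono {X : α → ℝ} {c c' : ℝ≥0} (hX : HasSubgaussianMGF X c μ)
    (hc : c ≤ c') : HasSubgaussianMGF X c' μ where
  integrable_exp_mul := hX.integrable_exp_mul
  mgf_le t := (hX.mgf_le t).trans <| by gcongr

lemma measureReal_le_abs_le_of_hasSubgaussianMGF [IsFiniteMeasure μ] {X : α → ℝ} {c : ℝ≥0}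
    (hX : HasSubgaussianMGF X c μ) {t : ℝ} (ht : 0 ≤ t) :
    μ.real {a | t ≤ |X a|} ≤ 2 * Real.exp (-t ^ 2 / (2 * c)) := by
  have hsplit : {a | t ≤ |X a|} = {a | t ≤ X a} ∪ {a | t ≤ (-X) a} := by
    ext a; simp [le_abs]
  calc μ.real {a | t ≤ |X a|} ≤ μ.real {a | t ≤ X a} + μ.real {a | t ≤ (-X) a} :=
        hsplit ▸ measureReal_union_le _ _
    _ ≤ _ := by linarith [hX.measure_ge_le ht, hX.neg.measure_ge_le ht]

lemma hasSubgaussianMGF_comp_sub_integral {φ : α → β} (hφ : MeasurePreserving φ μ ν) {f : β → ℝ}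
    {c : ℝ≥0} (hfm : AEStronglyMeasurable f ν)
    (hf : HasSubgaussianMGF (fun b => f b - ∫ b', f b' ∂ν) c ν) :
    HasSubgaussianMGF (fun a => f (φ a) - ∫ a', f (φ a') ∂μ) c μ := by
  rw [← hφ.map_eq] at hf hfm
  rw [← integral_map hφ.aemeasurable hfm]
  exact hf.of_map hφ.aemeasurable

lemma hasSubgaussianMGF_of_abs_sub_le [IsProbabilityMeasure μ] {X : α → ℝ}
    (hX : AEMeasurable X μ) {c : ℝ≥0} (hc : ∀ a b, |X a - X b| ≤ c) :
    HasSubgaussianMGF (fun a => X a - ∫ b, X b ∂μ) ((c / 2) ^ 2) μ := by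
  obtain ⟨a₀⟩ : Nonempty α := μ.nonempty_of_neZero
  have hbdd : BddBelow (Set.range X) :=
    ⟨X a₀ - c, by rintro _ ⟨a, rfl⟩; linarith [(abs_le.1 (hc a a₀)).1]⟩
  have hrange (a : α) : X a ∈ Set.Icc (⨅ b, X b) ((⨅ b, X b) + c) := by
    have : Nonempty α := ⟨a⟩
    have : X a - c ≤ ⨅ b, X b := le_ciInf fun b => by linarith [(abs_le.1 (hc a b)).2]
    exact ⟨ciInf_le hbdd a, by linarith⟩
  simpa using hasSubgaussianMGF_of_mem_Icc hX (.of_forall hrange)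

lemma hasSubgaussianMGF_add_prod [SFinite μ] [SFinite ν] {X : α → ℝ} {Y : α × β → ℝ}
    {cX cY : ℝ≥0} (hX : HasSubgaussianMGF X cX μ) (hYm : AEMeasurable Y (μ.prod ν))
    (hY : ∀ᵐ a ∂μ, HasSubgaussianMGF (fun b => Y (a, b)) cY ν) :
    HasSubgaussianMGF (fun q => X q.1 + Y q) (cX + cY) (μ.prod ν) := by
  have hexp (t : ℝ) (a : α) (b : β) :
      Real.exp (t * (X a + Y (a, b))) = Real.exp (t * X a) * Real.exp (t * Y (a, b)) := by
    rw [mul_add, Real.exp_add]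
  have hfibre (t : ℝ) : ∀ᵐ a ∂μ, ∫ b, Real.exp (t * (X a + Y (a, b))) ∂ν
      ≤ Real.exp (t * X a) * Real.exp (cY * t ^ 2 / 2) := by
    filter_upwards [hY] with a ha
    simp only [hexp, integral_const_mul]
    gcongr
    exact ha.mgf_le t
  have hbound (t : ℝ) := (hX.integrable_exp_mul t).mul_const (Real.exp (cY * t ^ 2 / 2))
  have hint (t : ℝ) : Integrable (fun q => Real.exp (t * (X q.1 + Y q))) (μ.prod ν) := by
    have hmeas : AEStronglyMeasurable (fun q => Real.exp (t * (X q.1 + Y q))) (μ.prod ν) :=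
      (Real.measurable_exp.comp_aemeasurable <|
        (hX.aestronglyMeasurable.comp_fst.aemeasurable.add hYm).const_mul t).aestronglyMeasurable
    refine (integrable_prod_iff hmeas).2 ⟨?_, ?_⟩
    · filter_upwards [hY] with a ha
      simpa only [hexp] using (ha.integrable_exp_mul t).const_mul _
    · simp only [Real.norm_of_nonneg (Real.exp_nonneg _)]
      refine (hbound t).mono' hmeas.integral_prod_right' ?_
      filter_upwards [hfibre t] with a ha
      rwa [Real.norm_of_nonneg (integral_nonneg fun _ => Real.exp_nonneg _)]
  refine ⟨hint, fun t => ?_⟩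
  calc mgf (fun q => X q.1 + Y q) (μ.prod ν) t
      = ∫ a, ∫ b, Real.exp (t * (X a + Y (a, b))) ∂ν ∂μ := integral_prod _ (hint t)
    _ ≤ ∫ a, Real.exp (t * X a) * Real.exp (cY * t ^ 2 / 2) ∂μ :=
        integral_mono_ae (hint t).integral_prod_left (hbound t) (hfibre t)
    _ = mgf X μ t * Real.exp (cY * t ^ 2 / 2) := integral_mul_const _ _
    _ ≤ Real.exp (cX * t ^ 2 / 2) * Real.exp (cY * t ^ 2 / 2) := by gcongr; exact hX.mgf_le t
    _ = Real.exp (↑(cX + cY) * t ^ 2 / 2) := by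
        rw [← Real.exp_add, NNReal.coe_add]; ring_nf

end SubGaussian

section BoundedDifferences

lemma hasSubgaussianMGF_prod_of_abs_sub_le {α β : Type*} [MeasurableSpace α] [MeasurableSpace β]
    {μ : Measure α} {ν : Measure β} [IsProbabilityMeasure μ] [IsProbabilityMeasure ν]
    {f : α × β → ℝ} (hf : Measurable f) {c d : ℝ≥0}
    (hc : ∀ a a' b, |f (a, b) - f (a', b)| ≤ c)
    (hd : ∀ a, HasSubgaussianMGF (fun b => f (a, b) - ∫ b', f (a, b') ∂ν) d ν) :
    HasSubgaussianMGF (fun q => f q - ∫ q', f q' ∂μ.prod ν) ((c / 2) ^ 2 + d) (μ.prod ν) := by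
  let g : α → ℝ := fun a => ∫ b, f (a, b) ∂ν
  have hgm : Measurable g := hf.stronglyMeasurable.integral_prod_right'.measurable
  have hfint (a : α) : Integrable (fun b => f (a, b)) ν :=
    ((hd a).integrable.add (integrable_const (g a))).congr (.of_forall fun b => by simp [g])
  have hgc (a a' : α) : |g a - g a'| ≤ c := by
    rw [← integral_sub (hfint a) (hfint a')]
    simpa using norm_integral_le_of_norm_le_const (μ := ν) (f := fun b => f (a, b) - f (a', b))
      (.of_forall fun b => hc a a' b)
  have hsum := hasSubgaussianMGF_add_prod (μ := μ) (ν := ν)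
    (hasSubgaussianMGF_of_abs_sub_le hgm.aemeasurable hgc)
    (hf.sub (hgm.comp measurable_fst)).aemeasurable (.of_forall hd)
  have hfprod : Integrable f (μ.prod ν) :=
    (hsum.integrable.add (integrable_const (∫ a, g a ∂μ))).congr (.of_forall fun q => by simp [g])
  rw [integral_prod f hfprod]
  convert! hsum using 2 with q
  simp [g]

lemma hasSubgaussianMGF_pi_fin_of_abs_sub_le {n : ℕ} {Ω : Fin n → Type*}
    [∀ i, MeasurableSpace (Ω i)] (μ : ∀ i, Measure (Ω i)) [∀ i, IsProbabilityMeasure (μ i)]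
    {f : (∀ i, Ω i) → ℝ} (hf : Measurable f) {c : Fin n → ℝ≥0}
    (hc : ∀ i x y, (∀ j ≠ i, x j = y j) → |f x - f y| ≤ c i) :
    HasSubgaussianMGF (fun x => f x - ∫ y, f y ∂Measure.pi μ) (∑ i, (c i / 2) ^ 2)
      (Measure.pi μ) := by
  induction n with
  | zero =>
    have hconst (x : ∀ i, Ω i) : f x - ∫ y, f y ∂Measure.pi μ = 0 := by
      have : f = fun _ => f x := funext fun y => congrArg f (Subsingleton.elim _ _)
      rw [this]; simp
    simp [hconst]
  | succ n ih =>
    let e := MeasurableEquiv.piFinSuccAbove Ω 0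
    have he : MeasurePreserving e _ _ := measurePreserving_piFinSuccAbove μ 0
    have hfe : Measurable (f ∘ e.symm) := hf.comp e.symm.measurable
    have hzero (a : Ω 0) (b : ∀ j, Ω (Fin.succAbove 0 j)) : e.symm (a, b) 0 = a :=
      Fin.insertNth_apply_same 0 a b
    have hsucc (a : Ω 0) (b : ∀ j, Ω (Fin.succAbove 0 j)) (j : Fin n) :
        e.symm (a, b) (Fin.succAbove 0 j) = b j := Fin.insertNth_apply_succAbove 0 a b j
    have hhead (a a' b) : |f (e.symm (a, b)) - f (e.symm (a', b))| ≤ c 0 := by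
      refine hc 0 _ _ fun j hj => ?_
      obtain ⟨j, rfl⟩ := Fin.exists_succAbove_eq hj
      rw [hsucc, hsucc]
    have htail (a : Ω 0) := ih (fun j => μ (Fin.succAbove 0 j))
        (hfe.comp (measurable_prodMk_left (x := a))) (c := fun j => c (Fin.succAbove 0 j))
        fun i x y hxy => hc (Fin.succAbove 0 i) _ _ fun j hj => by
      obtain rfl | ⟨j, rfl⟩ := Fin.eq_self_or_eq_succAbove 0 j
      · rw [hzero, hzero]
      · rw [hsucc, hsucc]
        exact hxy j fun h => hj (congrArg _ h)
    have hprod := hasSubgaussianMGF_prod_of_abs_sub_le (μ := μ 0) hfe hhead htail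
    rw [Fin.sum_univ_succAbove _ 0]
    simpa only [Function.comp_apply, e.symm_apply_apply] using
      hasSubgaussianMGF_comp_sub_integral he hfe.aestronglyMeasurable hprod

/-- McDiarmid's bounded differences inequality. -/
theorem hasSubgaussianMGF_pi_of_abs_sub_le {ι : Type*} [Fintype ι] {Ω : ι → Type*}
    [∀ i, MeasurableSpace (Ω i)] (μ : ∀ i, Measure (Ω i)) [∀ i, IsProbabilityMeasure (μ i)]
    {f : (∀ i, Ω i) → ℝ} (hf : Measurable f) {c : ι → ℝ≥0}
    (hc : ∀ i x y, (∀ j ≠ i, x j = y j) → |f x - f y| ≤ c i) :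
    HasSubgaussianMGF (fun x => f x - ∫ y, f y ∂Measure.pi μ) (∑ i, (c i / 2) ^ 2)
      (Measure.pi μ) := by
  let τ := (Fintype.equivFin ι).symm
  let e := MeasurableEquiv.piCongrLeft Ω τ
  have he : MeasurePreserving e _ (Measure.pi μ) := measurePreserving_piCongrLeft μ τ
  have hfin := hasSubgaussianMGF_pi_fin_of_abs_sub_le (fun i => μ (τ i)) (hf.comp e.measurable)
    (c := c ∘ τ) fun i x y hxy => hc (τ i) _ _ fun j hj => by
      obtain ⟨j, rfl⟩ := τ.surjective j
      simp only [e, MeasurableEquiv.piCongrLeft_apply_apply]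
      exact hxy j fun h => hj (congrArg τ h)
  rw [← τ.sum_comp]
  simpa using hasSubgaussianMGF_comp_sub_integral (he.symm e)
    (hf.comp e.measurable).aestronglyMeasurable hfin

end BoundedDifferences

section Truncation

lemma abs_min_sq_sub_min_sq_le {L : ℝ} (hL : 0 ≤ L) (x y : ℝ) :
    |min (x ^ 2) (L ^ 2) - min (y ^ 2) (L ^ 2)| ≤ 2 * L * |x - y| := by
  have hsq (z : ℝ) : min (z ^ 2) (L ^ 2) = min |z| L ^ 2 := by
    rcases le_total |z| L with h | h
    · rw [min_eq_left h, sq_abs, min_eq_left (sq_le_sq.2 (by rwa [abs_of_nonneg hL]))]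
    · rw [min_eq_right h, min_eq_right (sq_le_sq.2 (by rwa [abs_of_nonneg hL]))]
  have hadd : |min |x| L + min |y| L| ≤ 2 * L := by
    rw [abs_of_nonneg (by positivity)]
    linarith [min_le_right |x| L, min_le_right |y| L]
  have hsub : |min |x| L - min |y| L| ≤ |x - y| :=
    (abs_min_sub_min_le_max _ _ _ _).trans <| by simpa using abs_abs_sub_abs_le_abs_sub x y
  rw [hsq, hsq, sq_sub_sq, abs_mul]
  gcongr

lemma abs_integral_min_sq_sub_integral_sq_le {Ω : Type*} [MeasurableSpace Ω] {μ : Measure Ω}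
    [IsFiniteMeasure μ] {X : Ω → ℝ} (hX : Measurable X) {B L : ℝ} (hL : 0 ≤ L)
    (hB : ∀ ω, |X ω| ≤ B) :
    |∫ ω, min (X ω ^ 2) (L ^ 2) ∂μ - ∫ ω, X ω ^ 2 ∂μ| ≤ B ^ 2 * μ.real {ω | L ≤ |X ω|} := by
  have hsq (ω : Ω) : X ω ^ 2 ≤ B ^ 2 := by rw [← sq_abs]; gcongr; exact hB ω
  have hset : MeasurableSet {ω | L ≤ |X ω|} := measurableSet_le measurable_const hX.abs
  have hint : Integrable (fun ω => X ω ^ 2) μ :=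
    .of_bound (hX.pow_const 2).aestronglyMeasurable (B ^ 2) (.of_forall fun ω => by simp [hsq])
  have hintmin : Integrable (fun ω => min (X ω ^ 2) (L ^ 2)) μ := hint.inf (integrable_const _)
  have hpoint (ω : Ω) : |min (X ω ^ 2) (L ^ 2) - X ω ^ 2|
      ≤ {ω | L ≤ |X ω|}.indicator (fun _ => B ^ 2) ω := by
    by_cases hω : L ≤ |X ω|
    · rw [Set.indicator_of_mem (by exact hω), abs_le]
      have : 0 ≤ min (X ω ^ 2) (L ^ 2) := by positivity
      constructor <;> linarith [hsq ω, min_le_left (X ω ^ 2) (L ^ 2), sq_nonneg (X ω)]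
    · have : X ω ^ 2 ≤ L ^ 2 := sq_le_sq.2 <| by rw [abs_of_nonneg hL]; exact (not_le.1 hω).le
      rw [Set.indicator_of_notMem (by exact hω), min_eq_left this]
      simp
  calc |∫ ω, min (X ω ^ 2) (L ^ 2) ∂μ - ∫ ω, X ω ^ 2 ∂μ|
      = |∫ ω, (min (X ω ^ 2) (L ^ 2) - X ω ^ 2) ∂μ| := by rw [integral_sub hintmin hint]
    _ ≤ ∫ ω, |min (X ω ^ 2) (L ^ 2) - X ω ^ 2| ∂μ := abs_integral_le_integral_abs
    _ ≤ ∫ ω, {ω | L ≤ |X ω|}.indicator (fun _ => B ^ 2) ω ∂μ :=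
        integral_mono (hintmin.sub hint).abs ((integrable_const _).indicator hset) hpoint
    _ = B ^ 2 * μ.real {ω | L ≤ |X ω|} := by
        rw [integral_indicator_const _ hset, smul_eq_mul, mul_comm]

end Truncation

section FinsetSums

lemma abs_sum_sub_sum_le_of_forall_ne_mem_iff {ι : Type*} {s t : Finset ι} (a : ι → ℝ) {i : ι}
    (hst : ∀ j ≠ i, j ∈ s ↔ j ∈ t) : |∑ j ∈ s, a j - ∑ j ∈ t, a j| ≤ |a i| := by
  classical
  have herase : s.erase i = t.erase i := by
    ext j; simpa using fun hj => hst j hj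
  have hsum (u : Finset ι) : ∑ j ∈ u, a j = ∑ j ∈ u.erase i, a j + if i ∈ u then a i else 0 := by
    split_ifs with hi
    · exact (sum_erase_add u a hi).symm
    · rw [erase_eq_of_notMem hi, add_zero]
  rw [hsum s, hsum t, herase, add_sub_add_left_eq_sub]
  split_ifs <;> simp

open scoped Classical in
lemma sum_toFinset_eq_sum_ite {ι M : Type*} [Fintype ι] [AddCommMonoid M] (s : Set ι) [Fintype s]
    (a : ι → M) : ∑ i ∈ s.toFinset, a i = ∑ i, if i ∈ s then a i else 0 := by
  rw [← sum_filter, Set.filter_mem_univ_eq_toFinset]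

end FinsetSums

section BinomialRandomGraph

open SimpleGraph
open scoped SimpleGraph

instance {V : Type*} [Finite V] : DiscreteMeasurableSpace (SimpleGraph V) :=
  have : MeasurableSingletonClass (SimpleGraph V) := ⟨fun G => by
    rw [← measurableEmbedding_edgeSet.measurableSet_image, Set.image_singleton]
    exact measurableSet_singleton _⟩
  inferInstance

variable {V : Type*} [Fintype V] (p : I)

variable (V) in
/-- For a loop `e`, the law `Ber(¬e.IsDiag, False, p)` is the point mass at `False`. -/
lemma measurePreserving_mem_edgeSet_binomialRandom :
    MeasurePreserving (fun (G : SimpleGraph V) e => e ∈ G.edgeSet) G(V, p)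
      (Measure.pi fun e : Sym2 V => Ber(¬e.IsDiag, False, p)) := by
  classical
  have hpi := Measure.infinitePi_eq_pi (μ := fun e : Sym2 V => Ber(¬e.IsDiag, False, p))
  have hgraph : Measure.map (fun x : Sym2 V → Prop => fromEdgeSet {e | x e})
      (Measure.pi fun e => Ber(¬e.IsDiag, False, p)) = G(V, p) := by
    rw [binomialRandom_eq_map, setBernoulli_eq_map, ← hpi,
      Measure.map_map .of_discrete .of_discrete]
    rfl
  have hloopless : MeasurePreserving (fun (x : Sym2 V → Prop) e => x e ∧ ¬e.IsDiag)
      (Measure.pi fun e => Ber(¬e.IsDiag, False, p))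
      (Measure.pi fun e => Ber(¬e.IsDiag, False, p)) :=
    measurePreserving_pi _ _ (f := fun (e : Sym2 V) q => q ∧ ¬e.IsDiag) fun e =>
      ⟨.of_discrete, by simp [map_bernoulliMeasure]⟩
  rw [← hgraph]
  refine .map_of_comp ?_ .of_discrete .of_discrete
  convert! hloopless using 1
  ext x e
  simp

variable {p} in
theorem hasSubgaussianMGF_binomialRandom_of_abs_sub_le [DecidableEq V] {f : SimpleGraph V → ℝ}
    {c : Sym2 V → ℝ≥0}
    (hc : ∀ e G H, (∀ e' ≠ e, e' ∈ G.edgeSet ↔ e' ∈ H.edgeSet) → |f G - f H| ≤ c e) :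
    HasSubgaussianMGF (fun G => f G - ∫ H, f H ∂G(V, p))
      (∑ e ∈ (⊤ : SimpleGraph V).edgeFinset, (c e / 2) ^ 2) G(V, p) := by
  have hpi := hasSubgaussianMGF_pi_of_abs_sub_le
    (fun e : Sym2 V => Ber(¬e.IsDiag, False, p)) (f := fun x => f (fromEdgeSet {e | x e}))
    (c := fun e => if e ∈ (⊤ : SimpleGraph V).edgeSet then c e else 0) .of_discrete
    fun e x y hxy => ?_
  · convert! hasSubgaussianMGF_comp_sub_integral
      (measurePreserving_mem_edgeSet_binomialRandom V p) .of_discrete hpi using 1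
    · simp
    · rw [edgeFinset, sum_toFinset_eq_sum_ite]
      exact sum_congr rfl fun e _ => by split_ifs <;> simp
  · have hoff (e' : Sym2 V) (he' : e' ≠ e) : e' ∈ (fromEdgeSet {e | x e}).edgeSet ↔
        e' ∈ (fromEdgeSet {e | y e}).edgeSet := by simp [hxy e' he']
    split_ifs with he
    · exact hc e _ _ hoff
    · have : fromEdgeSet {e | x e} = fromEdgeSet {e | y e} := edgeSet_injective <| by
        ext e'
        by_cases h : e' = e
        · simp_all
        · exact hoff e' h
      simp [this]

section LinearStatistics

variable [DecidableEq V] (a : Sym2 V → ℝ)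

open scoped Classical in
lemma hasSubgaussianMGF_sum_edgeFinset :
    HasSubgaussianMGF
      (fun G : SimpleGraph V => ∑ e ∈ G.edgeFinset, a e - ∫ H, ∑ e ∈ H.edgeFinset, a e ∂G(V, p))
      (∑ e ∈ (⊤ : SimpleGraph V).edgeFinset, (‖a e‖₊ / 2) ^ 2) G(V, p) :=
  hasSubgaussianMGF_binomialRandom_of_abs_sub_le fun e G H hGH =>
    abs_sum_sub_sum_le_of_forall_ne_mem_iff a fun e' he' => by simpa using hGH e' he'

open scoped Classical in
lemma integral_sum_edgeFinset :
    ∫ G : SimpleGraph V, ∑ e ∈ G.edgeFinset, a e ∂G(V, p)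
      = p * ∑ e ∈ (⊤ : SimpleGraph V).edgeFinset, a e := by
  have hmap := measurePreserving_mem_edgeSet_binomialRandom V p
  simp only [edgeFinset, sum_toFinset_eq_sum_ite]
  refine (integral_map (f := fun x => ∑ e, if x e then a e else 0) hmap.aemeasurable
    .of_discrete).symm.trans ?_
  rw [hmap.map_eq, integral_finsetSum _ fun _ _ => .of_finite, mul_sum]
  refine sum_congr rfl fun e _ => ?_
  refine (integral_comp_eval (μ := fun e : Sym2 V => Ber(¬e.IsDiag, False, p)) (i := e)
    (f := fun q : Prop => if q then a e else 0) .of_discrete).trans ?_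
  rw [integral_bernoulliMeasure]
  simp

open scoped Classical in
lemma variance_sum_edgeFinset :
    Var[fun G : SimpleGraph V => ∑ e ∈ G.edgeFinset, a e; G(V, p)]
      = p * (1 - p) * ∑ e ∈ (⊤ : SimpleGraph V).edgeFinset, a e ^ 2 := by
  have hmap := measurePreserving_mem_edgeSet_binomialRandom V p
  have hedge (e : Sym2 V) :
      Var[fun q : Prop => if q then a e else 0; Ber(¬e.IsDiag, False, p)]
        = p * (1 - p) * if e.IsDiag then 0 else a e ^ 2 := by
    rw [variance_eq_sub .of_discrete, integral_bernoulliMeasure, integral_bernoulliMeasure]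
    by_cases he : e.IsDiag
    · simp [he]
    · simp only [he, not_false_eq_true, Pi.pow_apply, ↓reduceIte, smul_eq_mul, ne_eq,
        OfNat.ofNat_ne_zero, zero_pow, mul_zero, add_zero]
      ring
  simp only [edgeFinset, sum_toFinset_eq_sum_ite]
  refine (hmap.variance_fun_comp (f := fun x => ∑ e, if x e then a e else 0)
    (Measurable.of_discrete).aemeasurable).trans ?_
  have hsum := variance_sum_pi (μ := fun e : Sym2 V => Ber(¬e.IsDiag, False, p))
    (X := fun e q => if q then a e else 0) fun e => .of_discrete
  simp only [Finset.sum_fn, hedge, ← mul_sum] at hsum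
  rw [hsum]
  congr! 2
  simp

end LinearStatistics

section Degrees

lemma degree_eq_sum_edgeFinset [DecidableEq V] (G : SimpleGraph V) [DecidableRel G.Adj] (v : V) :
    (G.degree v : ℝ) = ∑ e ∈ G.edgeFinset, if v ∈ e then 1 else 0 := by
  rw [← card_incidenceFinset_eq_degree, incidenceFinset_eq_filter, sum_boole]

lemma sum_mem_edgeFinset_top [DecidableEq V] (v : V) :
    ∑ e ∈ (⊤ : SimpleGraph V).edgeFinset, (if v ∈ e then 1 else 0 : ℝ) = Fintype.card V - 1 := by
  have : Nonempty V := ⟨v⟩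
  rw [← degree_eq_sum_edgeFinset, complete_graph_degree, Nat.cast_pred Fintype.card_pos]

open scoped Classical in
/-- The degree of `v` in `G`, minus its mean `p * (n - 1)` when `G` is distributed as `G(V, p)`
and `n` is the number of vertices. -/
def centredDegree (v : V) (G : SimpleGraph V) : ℝ := G.degree v - p * (Fintype.card V - 1)

open scoped Classical in
lemma integral_degree (v : V) :
    ∫ G : SimpleGraph V, (G.degree v : ℝ) ∂G(V, p) = p * (Fintype.card V - 1) := by
  classical
  simp only [degree_eq_sum_edgeFinset, integral_sum_edgeFinset, sum_mem_edgeFinset_top]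

lemma integral_centredDegree_sq (v : V) :
    ∫ G, centredDegree p v G ^ 2 ∂G(V, p) = p * (1 - p) * (Fintype.card V - 1) := by
  classical
  have hvar := variance_sum_edgeFinset p fun e : Sym2 V => if v ∈ e then 1 else 0
  simp only [ite_pow, one_pow, zero_pow two_ne_zero] at hvar
  rw [sum_mem_edgeFinset_top] at hvar
  simp only [← degree_eq_sum_edgeFinset] at hvar
  rw [variance_eq_integral .of_discrete, integral_degree] at hvar
  exact hvar

lemma hasSubgaussianMGF_centredDegree (v : V) :
    HasSubgaussianMGF (centredDegree p v) (Fintype.card V / 4) G(V, p) := by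
  classical
  have hsum := hasSubgaussianMGF_sum_edgeFinset p fun e : Sym2 V => if v ∈ e then 1 else 0
  simp only [← degree_eq_sum_edgeFinset, integral_degree] at hsum
  refine hasSubgaussianMGF_mono hsum ?_
  have hweight (e : Sym2 V) :
      (‖(if v ∈ e then 1 else 0 : ℝ)‖ / 2) ^ 2 = (if v ∈ e then 1 else 0) / 4 := by
    split_ifs <;> norm_num
  rw [← NNReal.coe_le_coe]
  push_cast
  simp only [hweight, ← sum_div]
  rw [sum_mem_edgeFinset_top]
  linarith

lemma measureReal_le_abs_centredDegree_le (v : V) {L : ℝ} (hL : 0 ≤ L) :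
    G(V, p).real {G | L ≤ |centredDegree p v G|} ≤ 2 * Real.exp (-2 * L ^ 2 / Fintype.card V) := by
  refine (measureReal_le_abs_le_of_hasSubgaussianMGF
    (hasSubgaussianMGF_centredDegree p v) hL).trans_eq ?_
  congr 2
  push_cast
  ring

lemma abs_centredDegree_le (v : V) (G : SimpleGraph V) :
    |centredDegree p v G| ≤ Fintype.card V := by
  classical
  have : (G.degree v : ℝ) + 1 ≤ Fintype.card V := mod_cast G.degree_lt_card_verts v
  have := p.2.1
  have := p.2.2
  rw [centredDegree, abs_le]
  constructor <;> nlinarith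

lemma abs_centredDegree_sub_le [DecidableEq V] (v : V) {G H : SimpleGraph V} {e : Sym2 V}
    (hGH : ∀ e' ≠ e, e' ∈ G.edgeSet ↔ e' ∈ H.edgeSet) :
    |centredDegree p v G - centredDegree p v H| ≤ if v ∈ e then 1 else 0 := by
  classical
  have h := abs_sum_sub_sum_le_of_forall_ne_mem_iff (s := G.edgeFinset) (t := H.edgeFinset)
    (fun e : Sym2 V => if v ∈ e then (1 : ℝ) else 0) fun e' he' => by simpa using hGH e' he'
  rw [abs_of_nonneg (a := ite _ _ _) (by positivity)] at h
  simpa [centredDegree, degree_eq_sum_edgeFinset] using h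

end Degrees

section TruncatedSum

/-- The sum over all vertices of the squared centred degree, truncated at `L ^ 2`. Unlike the
untruncated sum, it changes by at most `4 * L` when a single edge is flipped. -/
def truncatedSumSq (L : ℝ) (G : SimpleGraph V) : ℝ :=
  ∑ v, min (centredDegree p v G ^ 2) (L ^ 2)

lemma abs_truncatedSumSq_sub_le {L : ℝ} (hL : 0 ≤ L) {G H : SimpleGraph V}
    {e : Sym2 V} (hGH : ∀ e' ≠ e, e' ∈ G.edgeSet ↔ e' ∈ H.edgeSet) :
    |truncatedSumSq p L G - truncatedSumSq p L H| ≤ 4 * L := by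
  classical
  have hcard : (#{v | v ∈ e} : ℝ) ≤ 2 := by
    have : univ.filter (· ∈ e) = e.toFinset := by ext; simp
    rw [this, Sym2.card_toFinset]
    split_ifs <;> norm_num
  rw [truncatedSumSq, truncatedSumSq, ← sum_sub_distrib]
  calc |∑ v, (min (centredDegree p v G ^ 2) (L ^ 2) - min (centredDegree p v H ^ 2) (L ^ 2))|
      ≤ ∑ v, |min (centredDegree p v G ^ 2) (L ^ 2) - min (centredDegree p v H ^ 2) (L ^ 2)| :=
        abs_sum_le_sum_abs _ _
    _ ≤ ∑ v, 2 * L * if v ∈ e then 1 else 0 := by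
        refine sum_le_sum fun v _ => (abs_min_sq_sub_min_sq_le hL _ _).trans ?_
        gcongr
        exact abs_centredDegree_sub_le p v hGH
    _ = 2 * L * #{v | v ∈ e} := by rw [← mul_sum, sum_boole]
    _ ≤ 4 * L := by nlinarith

lemma hasSubgaussianMGF_truncatedSumSq (L : ℝ≥0) :
    HasSubgaussianMGF
      (fun G : SimpleGraph V => truncatedSumSq p L G - ∫ H, truncatedSumSq p L H ∂G(V, p))
      (2 * L ^ 2 * Fintype.card V ^ 2) G(V, p) := by
  classical
  refine hasSubgaussianMGF_mono (hasSubgaussianMGF_binomialRandom_of_abs_sub_le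
    (c := fun _ => 4 * L) fun e G H hGH => abs_truncatedSumSq_sub_le p L.2 hGH) ?_
  rw [sum_const, card_edgeFinset_top_eq_card_choose_two, nsmul_eq_mul, ← NNReal.coe_le_coe]
  push_cast [Nat.cast_choose_two]
  have : (0 : ℝ) ≤ Fintype.card V * L ^ 2 := by positivity
  linarith

lemma abs_integral_truncatedSumSq_sub_le {L : ℝ} (hL : 0 ≤ L) :
    |∫ G : SimpleGraph V, truncatedSumSq p L G ∂G(V, p)
        - p * (1 - p) * (Fintype.card V * (Fintype.card V - 1) : ℝ)|
      ≤ 2 * Fintype.card V ^ 3 * Real.exp (-2 * L ^ 2 / Fintype.card V) := by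
  have hsum : p * (1 - p) * (Fintype.card V * (Fintype.card V - 1) : ℝ)
      = ∑ v : V, ∫ G, centredDegree p v G ^ 2 ∂G(V, p) := by
    simp only [integral_centredDegree_sq, sum_const, card_univ, nsmul_eq_mul]
    ring
  have hterm (v : V) : |∫ G, min (centredDegree p v G ^ 2) (L ^ 2) ∂G(V, p)
      - ∫ G, centredDegree p v G ^ 2 ∂G(V, p)|
      ≤ Fintype.card V ^ 2 * (2 * Real.exp (-2 * L ^ 2 / Fintype.card V)) := by
    refine (abs_integral_min_sq_sub_integral_sq_le .of_discrete hL
      (abs_centredDegree_le p v)).trans ?_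
    gcongr
    exact measureReal_le_abs_centredDegree_le p v hL
  simp only [truncatedSumSq]
  rw [integral_finsetSum _ fun _ _ => .of_finite, hsum, ← sum_sub_distrib]
  calc _ ≤ _ := abs_sum_le_sum_abs _ _
    _ ≤ _ := sum_le_sum fun v _ => hterm v
    _ = _ := by simp only [sum_const, card_univ, nsmul_eq_mul]; ring

end TruncatedSum

section EdgeCount

open scoped Classical in
/-- The number of edges of `G`, minus its mean when `G` is distributed as `G(V, p)`. -/
def centredEdgeCount (G : SimpleGraph V) : ℝ := #G.edgeFinset - p * (Fintype.card V).choose 2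

lemma hasSubgaussianMGF_centredEdgeCount :
    HasSubgaussianMGF (centredEdgeCount p) (Fintype.card V ^ 2 / 8) G(V, p) := by
  classical
  have hsum := hasSubgaussianMGF_sum_edgeFinset p fun _ : Sym2 V => 1
  rw [integral_sum_edgeFinset] at hsum
  simp only [sum_const, nsmul_one, card_edgeFinset_top_eq_card_choose_two, nnnorm_one] at hsum
  refine hasSubgaussianMGF_mono hsum ?_
  rw [nsmul_eq_mul, ← NNReal.coe_le_coe]
  push_cast [Nat.cast_choose_two]
  linarith [(Fintype.card V).cast_nonneg (α := ℝ)]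

lemma sum_centredDegree (G : SimpleGraph V) :
    ∑ v, centredDegree p v G = 2 * centredEdgeCount p G := by
  classical
  have hhandshake : ∑ v, (G.degree v : ℝ) = 2 * #G.edgeFinset :=
    mod_cast G.sum_degrees_eq_twice_card_edges
  simp only [centredDegree, centredEdgeCount, sum_sub_distrib, hhandshake, sum_const, card_univ,
    nsmul_eq_mul, Nat.cast_choose_two]
  ring

end EdgeCount

section DegreeVariation

lemma sum_sq_sub_card_mul_mean_sq {ι : Type*} [Fintype ι] (x : ι → ℝ) (c : ℝ) :
    ∑ i, x i ^ 2 - Fintype.card ι * ((∑ i, x i) / Fintype.card ι) ^ 2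
      = ∑ i, (x i - c) ^ 2 - (∑ i, (x i - c)) ^ 2 / Fintype.card ι := by
  cases isEmpty_or_nonempty ι
  · simp
  simp only [sub_sq, sum_sub_distrib, sum_add_distrib, ← sum_mul, ← mul_sum, sum_const, card_univ,
    nsmul_eq_mul]
  field_simp
  ring

open scoped Classical in
/-- The number `n` of vertices times the variance of the degree sequence, written as the sum of
the squared degrees minus `n` times the square of the average degree `2 * e(G) / n`. -/
def degreeVariation (G : SimpleGraph V) : ℝ :=
  ∑ v, (G.degree v : ℝ) ^ 2 - Fintype.card V * (2 * #G.edgeFinset / Fintype.card V) ^ 2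

lemma degreeVariation_eq_sum_centredDegree_sq_sub (G : SimpleGraph V) :
    degreeVariation G
      = ∑ v, centredDegree p v G ^ 2 - 4 * centredEdgeCount p G ^ 2 / Fintype.card V := by
  classical
  have hhandshake : 2 * (#G.edgeFinset : ℝ) = ∑ v, (G.degree v : ℝ) :=
    mod_cast G.sum_degrees_eq_twice_card_edges.symm
  calc degreeVariation G
      = ∑ v, centredDegree p v G ^ 2 - (∑ v, centredDegree p v G) ^ 2 / Fintype.card V := by
        rw [degreeVariation, hhandshake]
        exact sum_sq_sub_card_mul_mean_sq _ _
    _ = _ := by rw [sum_centredDegree]; ring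

variable {p} in
lemma abs_degreeVariation_sub_le {G : SimpleGraph V} {L s t : ℝ} (hL : 0 ≤ L)
    (ht : |truncatedSumSq p L G - ∫ H, truncatedSumSq p L H ∂G(V, p)| ≤ t)
    (hdegree : ∀ v, |centredDegree p v G| ≤ L) (hedges : |centredEdgeCount p G| ≤ s) :
    |degreeVariation G - p * (1 - p) * Fintype.card V ^ 2|
      ≤ t + 2 * Fintype.card V ^ 3 * Real.exp (-2 * L ^ 2 / Fintype.card V) + Fintype.card V
        + 4 * s ^ 2 / Fintype.card V := by
  have htrunc : truncatedSumSq p L G = ∑ v, centredDegree p v G ^ 2 :=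
    sum_congr rfl fun v _ => min_eq_left <| sq_le_sq.2 <| by
      rw [abs_of_nonneg hL]; exact hdegree v
  have hmean := abs_integral_truncatedSumSq_sub_le (V := V) p hL
  have hsq : 4 * centredEdgeCount p G ^ 2 / Fintype.card V ≤ 4 * s ^ 2 / Fintype.card V := by
    rw [← sq_abs]; gcongr
  have hsq_nonneg : 0 ≤ 4 * centredEdgeCount p G ^ 2 / Fintype.card V := by positivity
  have hpp : 0 ≤ (p * (1 - p) : ℝ) ∧ (p * (1 - p) : ℝ) ≤ 1 :=
    ⟨mul_nonneg p.2.1 (sub_nonneg.2 p.2.2), by nlinarith [p.2.1, p.2.2]⟩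
  have hdiag_nonneg : 0 ≤ (p * (1 - p) * Fintype.card V : ℝ) := by have := hpp.1; positivity
  have hdiag : (p * (1 - p) * Fintype.card V : ℝ) ≤ Fintype.card V :=
    mul_le_of_le_one_left (Nat.cast_nonneg _) hpp.2
  rw [degreeVariation_eq_sum_centredDegree_sq_sub p, ← htrunc]
  rw [abs_le] at ht hmean ⊢
  constructor <;> linarith

end DegreeVariation

section Concentration

variable {p}

lemma measureReal_degreeVariation_lt_le_add {L s t : ℝ} (hL : 0 ≤ L) (hs : 0 ≤ s)
    (ht : 0 ≤ t) :
    G(V, p).real {G | t + 2 * Fintype.card V ^ 3 * Real.exp (-2 * L ^ 2 / Fintype.card V)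
        + Fintype.card V + 4 * s ^ 2 / Fintype.card V
        < |degreeVariation G - p * (1 - p) * Fintype.card V ^ 2|}
      ≤ 2 * Real.exp (-t ^ 2 / (4 * L ^ 2 * Fintype.card V ^ 2))
        + Fintype.card V * (2 * Real.exp (-2 * L ^ 2 / Fintype.card V))
        + 2 * Real.exp (-4 * s ^ 2 / Fintype.card V ^ 2) := by
  lift L to ℝ≥0 using hL
  let badSum : Set (SimpleGraph V) :=
    {G | t ≤ |truncatedSumSq p L G - ∫ H, truncatedSumSq p L H ∂G(V, p)|}
  let badDegree (v : V) : Set (SimpleGraph V) := {G | L ≤ |centredDegree p v G|}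
  let badEdges : Set (SimpleGraph V) := {G | s ≤ |centredEdgeCount p G|}
  have hbadSum : G(V, p).real badSum
      ≤ 2 * Real.exp (-t ^ 2 / (4 * L ^ 2 * Fintype.card V ^ 2)) := by
    refine (measureReal_le_abs_le_of_hasSubgaussianMGF
      (hasSubgaussianMGF_truncatedSumSq p L) ht).trans_eq ?_
    push_cast
    ring_nf
  have hbadEdges : G(V, p).real badEdges ≤ 2 * Real.exp (-4 * s ^ 2 / Fintype.card V ^ 2) := by
    refine (measureReal_le_abs_le_of_hasSubgaussianMGF
      (hasSubgaussianMGF_centredEdgeCount p) hs).trans_eq ?_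
    push_cast
    ring_nf
  calc _ ≤ G(V, p).real (badSum ∪ (⋃ v, badDegree v) ∪ badEdges) := by
        refine measureReal_mono fun G => not_imp_not.1 fun hG => ?_
        simp only [badSum, badDegree, badEdges, Set.mem_union, Set.mem_iUnion, Set.mem_ofPred_eq,
          not_or, not_exists, not_le, not_lt] at hG ⊢
        exact abs_degreeVariation_sub_le L.2 hG.1.1.le (fun v => (hG.1.2 v).le) hG.2.le
    _ ≤ G(V, p).real badSum + ∑ v, G(V, p).real (badDegree v) + G(V, p).real badEdges := by
        grw [measureReal_union_le, measureReal_union_le, measureReal_iUnion_fintype_le]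
    _ ≤ 2 * Real.exp (-t ^ 2 / (4 * L ^ 2 * Fintype.card V ^ 2))
          + ∑ v : V, 2 * Real.exp (-2 * L ^ 2 / Fintype.card V)
          + 2 * Real.exp (-4 * s ^ 2 / Fintype.card V ^ 2) := by
        gcongr with v
        exact measureReal_le_abs_centredDegree_le p v L.2
    _ = _ := by rw [sum_const, card_univ, nsmul_eq_mul]

theorem measureReal_degreeVariation_lt_le [Nonempty V] {y : ℝ} (hy : 1 ≤ y) :
    G(V, p).real {G | 6 * ((Fintype.card V : ℝ) ^ (3 / 2 : ℝ) * y)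
        + 2 * Fintype.card V ^ 3 * Real.exp (-2 * y)
        < |degreeVariation G - p * (1 - p) * Fintype.card V ^ 2|}
      ≤ (2 * Fintype.card V + 4) * Real.exp (-(y / 4)) := by
  have hN : (1 : ℝ) ≤ Fintype.card V := Nat.one_le_cast.2 Fintype.card_pos
  have hbound := measureReal_degreeVariation_lt_le_add (V := V) (p := p)
    (L := Real.sqrt (Fintype.card V * y)) (s := Fintype.card V * Real.sqrt y)
    (t := (Fintype.card V : ℝ) ^ (3 / 2 : ℝ) * y) (by positivity) (by positivity) (by positivity)
  generalize (Fintype.card V : ℝ) = N at hbound hN ⊢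
  rw [mul_pow, mul_pow, Real.sq_sqrt (by positivity), Real.sq_sqrt (by positivity),
    ← Real.rpow_mul_natCast (by positivity)] at hbound
  have hexp_sum : -(N ^ (3 / 2 * (2 : ℕ) : ℝ) * y ^ 2) / (4 * (N * y) * N ^ 2) = -(y / 4) := by
    have : N ^ (3 / 2 * (2 : ℕ) : ℝ) = N ^ 3 := by rw [← Real.rpow_natCast]; norm_num
    rw [this]
    field_simp
  have hexp_degree : -2 * (N * y) / N = -2 * y := by field_simp
  have hexp_edges : -4 * (N ^ 2 * y) / N ^ 2 = -4 * y := by field_simp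
  have hedges : 4 * (N ^ 2 * y) / N = 4 * (N * y) := by field_simp
  rw [hexp_sum, hexp_degree, hexp_edges, hedges] at hbound
  refine le_trans ?_ (hbound.trans ?_)
  · refine measureReal_mono fun G hG => ?_
    rw [Set.mem_ofPred_eq] at hG ⊢
    have hN_le : N ≤ N ^ (3 / 2 : ℝ) := Real.self_le_rpow_of_one_le hN (by norm_num)
    have hNy : N * y ≤ N ^ (3 / 2 : ℝ) * y := by gcongr
    have hN_le_Ny : N ≤ N * y := le_mul_of_one_le_right (by linarith) hy
    linarith
  · calc 2 * Real.exp (-(y / 4)) + N * (2 * Real.exp (-2 * y)) + 2 * Real.exp (-4 * y)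
        ≤ 2 * Real.exp (-(y / 4)) + N * (2 * Real.exp (-(y / 4))) + 2 * Real.exp (-(y / 4)) := by
          gcongr <;> linarith
      _ = (2 * N + 4) * Real.exp (-(y / 4)) := by ring

end Concentration

end BinomialRandomGraph

section EdgeSetModel

open SimpleGraph
open scoped SimpleGraph

lemma mem_powerset_completeEdges {n : ℕ} {A : Finset (Sym2 (Fin n))} :
    A ∈ (completeEdges n).powerset ↔ ∀ e ∈ A, ¬ e.IsDiag := by
  simp [completeEdges, subset_iff]

lemma card_completeEdges (n : ℕ) : #(completeEdges n) = n.choose 2 := by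
  classical
  rw [← Fintype.card_fin n, ← Sym2.card_subtype_not_diag, Fintype.card_subtype, Fintype.card_fin]
  unfold completeEdges
  congr!

open scoped Classical in
lemma PrGnp_eq_measureReal_binomialRandom (n : ℕ) (p : I)
    (P : Finset (Sym2 (Fin n)) → Prop) :
    PrGnp n p P = G(Fin n, p).real {G | P G.edgeFinset} := by
  calc PrGnp n p P
      = ∑ G : SimpleGraph (Fin n), if P G.edgeFinset then
          (p : ℝ) ^ #G.edgeFinset * (1 - p) ^ (n.choose 2 - #G.edgeFinset) else 0 := by
        simp_rw [PrGnp, card_completeEdges]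
        refine (sum_bij (fun G _ => G.edgeFinset) (fun G _ => ?_)
          (fun G _ H _ => edgeFinset_inj.1) (fun A hA => ?_) (fun _ _ => rfl)).symm
        · exact mem_powerset_completeEdges.2 fun _ => G.not_isDiag_of_mem_edgeFinset
        · refine ⟨fromEdgeSet A, mem_univ _, ?_⟩
          ext e
          simpa using mem_powerset_completeEdges.1 hA e
    _ = ∑ G : SimpleGraph (Fin n) with P G.edgeFinset, G(Fin n, p).real {G} := by
        rw [sum_filter]
        refine sum_congr rfl fun G _ => ?_
        have hcard : G.edgeSet.ncard = #G.edgeFinset := by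
          rw [← G.coe_edgeFinset, Set.ncard_coe_finset]
        simp [measureReal_def, hcard]
    _ = G(Fin n, p).real {G | P G.edgeFinset} := by
        rw [sum_measureReal_singleton]
        simp

lemma PrGnp_mono {n : ℕ} {p : ℝ} (hp : p ∈ I) {P Q : Finset (Sym2 (Fin n)) → Prop}
    (h : ∀ A, P A → Q A) : PrGnp n p P ≤ PrGnp n p Q := by
  classical
  lift p to I using hp
  simp only [PrGnp_eq_measureReal_binomialRandom]
  exact measureReal_mono fun G => h G.edgeFinset

open scoped Classical in
lemma Vdeg_edgeFinset {n : ℕ} (G : SimpleGraph (Fin n)) :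
    Vdeg G.edgeFinset = degreeVariation G := by
  have hdegree (v : Fin n) : dS G.edgeFinset univ v = G.degree v := by
    simp [dS, ← card_neighborFinset_eq_degree, neighborFinset_eq_filter]
  simp only [Vdeg, degreeVariation, hdegree, Fintype.card_fin]

end EdgeSetModel

section Asymptotics

open Filter

lemma eventually_mul_pow_mul_exp_neg_mul_rpow_le_one (C : ℝ) (k : ℕ) {b ε : ℝ} (hb : 0 < b)
    (hε : 0 < ε) : ∀ᶠ n : ℕ in atTop, C * (n : ℝ) ^ k * Real.exp (-b * (n : ℝ) ^ ε) ≤ 1 := by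
  have hlim : Tendsto (fun n : ℕ => C * (((n : ℝ) ^ ε) ^ (k / ε) *
      Real.exp (-b * (n : ℝ) ^ ε))) atTop (nhds (C * 0)) :=
    ((tendsto_rpow_mul_exp_neg_mul_atTop_nhds_zero (k / ε) b hb).comp
      ((tendsto_rpow_atTop hε).comp tendsto_natCast_atTop_atTop)).const_mul C
  filter_upwards [hlim.eventually_le_const (by simp : C * 0 < 1)] with n hn
  rwa [← Real.rpow_mul n.cast_nonneg, mul_div_cancel₀ _ hε.ne', Real.rpow_natCast,
    ← mul_assoc] at hn

lemma eventually_add_mul_exp_neg_rpow_le_exp_neg_rpow {ε : ℝ} (hε : 0 < ε) :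
    ∀ᶠ n : ℕ in atTop,
      (2 * (n : ℝ) + 4) * Real.exp (-((n : ℝ) ^ ε / 4)) ≤ Real.exp (-(n : ℝ) ^ (ε / 2)) := by
  filter_upwards [eventually_mul_pow_mul_exp_neg_mul_rpow_le_one 6 1 (b := 1 / 8) (by norm_num) hε,
    ((tendsto_rpow_atTop (half_pos hε)).comp tendsto_natCast_atTop_atTop).eventually_ge_atTop 8,
    eventually_ge_atTop 1] with n hpoly hlarge hn
  have hsq : (n : ℝ) ^ ε = (n : ℝ) ^ (ε / 2) * (n : ℝ) ^ (ε / 2) := by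
    rw [← Real.rpow_add (by positivity), add_halves]
  have hn : (1 : ℝ) ≤ n := by exact_mod_cast hn
  have hexponent : (n : ℝ) ^ (ε / 2) ≤ 1 / 8 * (n : ℝ) ^ ε := by
    rw [Function.comp_apply] at hlarge
    nlinarith
  calc (2 * (n : ℝ) + 4) * Real.exp (-((n : ℝ) ^ ε / 4))
      ≤ 6 * (n : ℝ) ^ 1 * Real.exp (-((n : ℝ) ^ ε / 4)) := by gcongr; linarith
    _ = 6 * (n : ℝ) ^ 1 * Real.exp (-(1 / 8) * (n : ℝ) ^ ε)
          * Real.exp (-(1 / 8 * (n : ℝ) ^ ε)) := by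
        rw [mul_assoc _ (Real.exp _), ← Real.exp_add]
        ring_nf
    _ ≤ 1 * Real.exp (-(n : ℝ) ^ (ε / 2)) := by gcongr
    _ = Real.exp (-(n : ℝ) ^ (ε / 2)) := one_mul _

end Asymptotics

theorem one_sub_le_PrGnp_abs_Vdeg_sub_le {n : ℕ} (hn : 1 ≤ n) {p y : ℝ} (hp : p ∈ I)
    (hy : 1 ≤ y) :
    1 - (2 * n + 4) * Real.exp (-(y / 4)) ≤ PrGnp n p fun G =>
      |Vdeg G - p * (1 - p) * (n : ℝ) ^ 2|
        ≤ 6 * ((n : ℝ) ^ (3 / 2 : ℝ) * y) + 2 * n ^ 3 * Real.exp (-2 * y) := by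
  have : NeZero n := ⟨by omega⟩
  lift p to I using hp
  have h := measureReal_degreeVariation_lt_le (V := Fin n) (p := p) hy
  simp only [PrGnp_eq_measureReal_binomialRandom, Vdeg_edgeFinset]
  rw [Fintype.card_fin] at h
  simp_rw [← not_le] at h
  rw [← Set.compl_ofPred, probReal_compl_eq_one_sub .of_discrete] at h
  linarith

theorem stmt_8_general {ε : ℝ} (hε : 0 < ε) :
    ∃ C > (0:ℝ), ∃ η > (0:ℝ), ∃ n₀ : ℕ, ∀ n ≥ n₀, ∀ p ∈ I,
      PrGnp n p (fun G => |Vdeg G - p * (1 - p) * (n:ℝ) ^ 2| ≤ C * (n:ℝ) ^ ((3:ℝ)/2 + ε))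
        ≥ 1 - Real.exp (-(n:ℝ) ^ η) := by
  obtain ⟨n₀, h₀⟩ := Filter.eventually_atTop.1 <| (Filter.eventually_ge_atTop 1).and <|
    (eventually_mul_pow_mul_exp_neg_mul_rpow_le_one 2 3 two_pos hε).and
      (eventually_add_mul_exp_neg_rpow_le_exp_neg_rpow hε)
  refine ⟨7, by norm_num, ε / 2, half_pos hε, n₀, fun n hn p hp => ?_⟩
  obtain ⟨hn_pos, htruncation, hunion⟩ := h₀ n hn
  have hn_one : (1 : ℝ) ≤ n := by exact_mod_cast hn_pos
  have hconc := one_sub_le_PrGnp_abs_Vdeg_sub_le hn_pos hp (Real.one_le_rpow hn_one hε.le)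
  rw [← Real.rpow_add (by positivity)] at hconc
  have hpow : 1 ≤ (n : ℝ) ^ ((3 : ℝ) / 2 + ε) := Real.one_le_rpow hn_one (by positivity)
  calc 1 - Real.exp (-(n : ℝ) ^ (ε / 2))
      ≤ 1 - (2 * n + 4) * Real.exp (-((n : ℝ) ^ ε / 4)) := by gcongr
    _ ≤ _ := hconc
    _ ≤ _ := PrGnp_mono hp fun G hG => hG.trans (by linarith)

/-- Remark 2.6: concentration of `V`.
Fix `δ, ε > 0`. There are `C > 0`, `η > 0`, `n₀` such that for all `n ≥ n₀` and
`p ∈ [δ, 1-δ]`, with probability at least `1 - exp(-n^η)` over `G_{n,p}`,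
`|V - p(1-p)n²| ≤ C·n^(3/2+ε)`, where `V = Σ_v d(v)² - n·d(G)²`. -/
theorem stmt_8 (δ ε : ℝ) (hδ : 0 < δ) (hε : 0 < ε) :
    ∃ C > (0:ℝ), ∃ η > (0:ℝ), ∃ n₀ : ℕ, ∀ n ≥ n₀, ∀ p : ℝ, δ ≤ p → p ≤ 1 - δ →
      PrGnp n p (fun G => |Vdeg G - p * (1 - p) * (n:ℝ) ^ 2| ≤ C * (n:ℝ) ^ ((3:ℝ)/2 + ε))
        ≥ 1 - Real.exp (-(n:ℝ) ^ η) := by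
  obtain ⟨C, hC, η, hη, n₀, h⟩ := stmt_8_general hε
  exact ⟨C, hC, η, hη, n₀, fun n hn p hp hp' => h n hn p ⟨by linarith, by linarith⟩⟩
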